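/- Suppose F satisfies (G1) and (G2) and the Perron–Frobenius operator P_σ of the base shift has spectral gap on d_θ-Lipschitz functions, and let μ₀ be the unique F-invariant probability measure in S^∞. Then every function f : Σ_A^+ × K → ℝ that is Lipschitz with respect to the metric d_θ + d satisfies fμ₀ ∈ S^∞; that is, the space of Lipschitz functions on Σ_A^+ × K is contained in Θ_{μ₀} = {f : fμ₀ ∈ S^∞}. -/

import Mathlib

open MeasureTheory ENNReal Set

namespace RDS

/-- The one-sided subshift of finite type `Σ_A^+` determined by the 0-1 matrix `A`. -/
abbrev SigmaA (N : ℕ) (A : Fin N → Fin N → Bool) :=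
  {x : ℕ → Fin N // ∀ i, A (x i) (x (i + 1)) = true}

variable {N : ℕ} {A : Fin N → Fin N → Bool}

/-- The shift map `σ` on `Σ_A^+`. -/
def shift (x : SigmaA N A) : SigmaA N A :=
  ⟨fun i => x.val (i + 1), fun i => x.prop (i + 1)⟩

/-- Aperiodicity of a 0-1 matrix: some power has all entries positive. -/
def Aperiodic (A : Fin N → Fin N → Bool) : Prop :=
  ∃ k : ℕ, 0 < k ∧ ∀ i j,
    0 < ((Matrix.of fun a b => if A a b then (1 : ℕ) else 0) ^ k) i j

/-- The metric `d_θ(x,y) = Σ_i θ^i (1 - δ(x_i, y_i))` on `Σ_A^+`. -/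
noncomputable def dTheta (θ : ℝ) (x y : SigmaA N A) : ℝ :=
  ∑' i : ℕ, θ ^ i * (if x.val i = y.val i then (0 : ℝ) else 1)

/-- Cylinder sets of `Σ_A^+`. -/
def cylinder (n : ℕ) (w : Fin (n + 1) → Fin N) : Set (SigmaA N A) :=
  {x | ∀ i : Fin (n + 1), x.val i = w i}

/-- `m` is a Markov measure on `Σ_A^+` compatible with `A`: it is given on
cylinders by a stochastic matrix `P` (vanishing where `A` vanishes) and a
stationary probability vector `p`. -/
def IsMarkov (m : Measure (SigmaA N A)) : Prop :=
  ∃ (p : Fin N → ℝ≥0∞) (P : Fin N → Fin N → ℝ≥0∞),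
    (∑ i, p i = 1) ∧ (∀ i, ∑ j, P i j = 1) ∧ (∀ j, ∑ i, p i * P i j = p j) ∧
    (∀ i j, A i j = false → P i j = 0) ∧
    ∀ (n : ℕ) (w : Fin (n + 1) → Fin N),
      m (cylinder n w) = p (w 0) * ∏ i : Fin n, P (w i.castSucc) (w i.succ)

/-- `σ_i⁻¹(γ)`: the sequence `γ` with the symbol `i` prepended
(defined when `A i γ₀ = 1`), i.e. the inverse branch of the restriction `σ_i`
of `σ` to the cylinder `[i]`. -/
def prepend (i : Fin N) (x : SigmaA N A) (h : A i (x.val 0) = true) : SigmaA N A :=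
  ⟨fun n => match n with
    | 0 => i
    | Nat.succ k => x.val k,
   fun j => match j with
    | 0 => h
    | Nat.succ k => x.prop k⟩

/-- `f` is `L`-Lipschitz with respect to the distance function `d`. -/
def LipWithD {X : Type*} (d : X → X → ℝ) (L : ℝ) (f : X → ℝ) : Prop :=
  ∀ x y, |f x - f y| ≤ L * d x y

/-- `f` is Lipschitz with respect to the distance function `d`. -/
def LipD {X : Type*} (d : X → X → ℝ) (f : X → ℝ) : Prop :=
  ∃ L : ℝ, LipWithD d L f

/-- The best Lipschitz constant of `f` with respect to `d` (valued in `ℝ≥0∞`). -/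
noncomputable def lipConst {X : Type*} (d : X → X → ℝ) (f : X → ℝ) : ℝ≥0∞ :=
  ⨆ (x : X) (y : X), ENNReal.ofReal (|f x - f y| / d x y)

/-- The sup norm of `f` (valued in `ℝ≥0∞`). -/
noncomputable def supNormE {X : Type*} (f : X → ℝ) : ℝ≥0∞ :=
  ⨆ x : X, ENNReal.ofReal |f x|

/-- The norm `‖f‖_θ = ‖f‖_∞ + Lip_d(f)`. -/
noncomputable def thetaNorm {X : Type*} (d : X → X → ℝ) (f : X → ℝ) : ℝ≥0∞ :=
  supNormE f + lipConst d f

/-- The Perron-Frobenius operator duality characterizing `P_σ`: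
`∫ P_σ(φ) · ψ dm = ∫ φ · (ψ ∘ σ) dm` for integrable `φ` and bounded measurable `ψ`. -/
def IsPerronFrobenius (m : Measure (SigmaA N A))
    (Pσ : (SigmaA N A → ℝ) → SigmaA N A → ℝ) : Prop :=
  ∀ φ ψ : SigmaA N A → ℝ, Integrable φ m → Measurable ψ → (∃ C, ∀ x, |ψ x| ≤ C) →
    ∫ x, Pσ φ x * ψ x ∂m = ∫ x, φ x * ψ (shift x) ∂m

/-- Spectral gap for `P_σ` on `d_θ`-Lipschitz functions with constants `D`, `r`:
`‖P_σ^n φ‖_θ ≤ D r^n ‖φ‖_θ` for all `n` and all `d_θ`-Lipschitz `φ` with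
`∫ φ dm = 0`. -/
def HasGap (m : Measure (SigmaA N A)) (θ : ℝ)
    (Pσ : (SigmaA N A → ℝ) → SigmaA N A → ℝ) (D r : ℝ) : Prop :=
  ∀ φ : SigmaA N A → ℝ, LipD (dTheta θ) φ → (∫ x, φ x ∂m) = 0 →
    ∀ n : ℕ, thetaNorm (dTheta θ) (Pσ^[n] φ) ≤
      ENNReal.ofReal (D * r ^ n) * thetaNorm (dTheta θ) φ

/-- `Jm i` is the Jacobian `J_{m,σ_i}` of `m` with respect to the branch `σ_i`
(the restriction of `σ` to the cylinder `[i]`): `m (σ_i(E)) = ∫_E J_{m,σ_i} dm`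
for every measurable `E` (intersected with `[i]`). -/
def IsJacobian (m : Measure (SigmaA N A)) (Jm : Fin N → SigmaA N A → ℝ) : Prop :=
  ∀ (i : Fin N) (E : Set (SigmaA N A)), MeasurableSet E →
    m {γ : SigmaA N A | ∃ h : A i (γ.val 0) = true, prepend i γ h ∈ E} =
      ∫⁻ x in E ∩ {x : SigmaA N A | x.val 0 = i}, ENNReal.ofReal (Jm i x) ∂m

variable {K : Type*} [MetricSpace K] [MeasurableSpace K]

/-- The Wasserstein-Kantorovich like distance `W(ν₁,ν₂)`: the supremum of
`|∫ g dν₁ - ∫ g dν₂|` over `g : K → ℝ` with `Lip(g) ≤ 1` and `‖g‖_∞ ≤ 1`.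
Applied with `ν₂ = 0` it gives the norm `‖ν₁‖_W`; applied to the two parts of a
decomposition of a signed measure it gives its `‖·‖_W` norm. -/
noncomputable def wDist (ν₁ ν₂ : Measure K) : ℝ≥0∞ :=
  ⨆ g : {g : K → ℝ // LipschitzWith 1 g ∧ ∀ z, |g z| ≤ 1},
    ENNReal.ofReal |∫ z, g.val z ∂ν₁ - ∫ z, g.val z ∂ν₂|

/-- The skew product `F(x,z) = (σ(x), G(x,z))`. -/
def skew (G : SigmaA N A × K → K) (p : SigmaA N A × K) : SigmaA N A × K :=
  (shift p.1, G p)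

/-- The transfer operator `F^* μ (E) = μ (F⁻¹ E)` acting on signed measures. -/
noncomputable def transfer (G : SigmaA N A × K → K)
    (μ : SignedMeasure (SigmaA N A × K)) : SignedMeasure (SigmaA N A × K) :=
  μ.map (skew G)

/-- Condition (G1): uniform contraction of the vertical fibers with rate `α`. -/
def CondG1 (G : SigmaA N A × K → K) (α : ℝ) : Prop :=
  ∀ (x : SigmaA N A) (z₁ z₂ : K), dist (G (x, z₁)) (G (x, z₂)) ≤ α * dist z₁ z₂

/-- Condition (G2): `x ↦ G(x,z)` is `d_θ`-Lipschitz with constant `H`,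
uniformly in `z`. -/
def CondG2 (θ : ℝ) (G : SigmaA N A × K → K) (H : ℝ) : Prop :=
  ∀ (z : K) (x y : SigmaA N A), dist (G (x, z)) (G (y, z)) ≤ H * dTheta θ x y

/-- `T` is (the path `γ ↦ μ|_γ` of) a disintegration of `μ` along the vertical
fibers, over the reference measure `m`: `μ(E) = ∫ (μ|_γ)(E ∩ γ) dm(γ)`. -/
def IsDisint (m : Measure (SigmaA N A)) (μ : Measure (SigmaA N A × K))
    (T : SigmaA N A → Measure K) : Prop :=
  (∀ E : Set (SigmaA N A × K), MeasurableSet E →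
      μ E = ∫⁻ γ, T γ {z | (γ, z) ∈ E} ∂m) ∧
  ∀ E : Set K, MeasurableSet E → Measurable fun γ => T γ E

/-- The (essential) `‖·‖_W`-Lipschitz constant of a path of measures,
`|Γ|_θ^ω = ess sup_{γ₁ ≠ γ₂} ‖Γ(γ₁) - Γ(γ₂)‖_W / d_θ(γ₁,γ₂)`. -/
noncomputable def pathLip (m : Measure (SigmaA N A)) (θ : ℝ)
    (T : SigmaA N A → Measure K) : ℝ≥0∞ :=
  essSup (fun p : SigmaA N A × SigmaA N A =>
    wDist (T p.1) (T p.2) / ENNReal.ofReal (dTheta θ p.1 p.2)) (m.prod m)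

/-- The Lipschitz constant `|μ|_θ` of a positive measure: the infimum over
disintegrations `ω` of `μ` of `|μ|_θ^ω`. -/
noncomputable def lipDisint (m : Measure (SigmaA N A)) (θ : ℝ)
    (μ : Measure (SigmaA N A × K)) : ℝ≥0∞ :=
  ⨅ T : {T : SigmaA N A → Measure K // IsDisint m μ T}, pathLip m θ T.val

/-- The fiberwise transfer formula: the path representing `F^*μ` induced by the
path `T` representing `μ`, i.e.
`γ ↦ Σ_i 1_{σ([i])}(γ) (F_{iγ})_*(T(iγ)) / J_{m,σ_i}(iγ)`. -/
noncomputable def transferPath (G : SigmaA N A × K → K) (Jm : Fin N → SigmaA N A → ℝ)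
    (T : SigmaA N A → Measure K) : SigmaA N A → Measure K :=
  fun γ => ∑ i : Fin N, if h : A i (γ.val 0) = true then
      ENNReal.ofReal ((Jm i (prepend i γ h))⁻¹) •
        ((T (prepend i γ h)).map fun z => G (prepend i γ h, z))
    else 0

variable [BorelSpace K] [CompactSpace K] [Nonempty K]

/-- The fiberwise restriction `μ|_γ = π₂_* (φ₁(γ) μ_γ)` of a finite positive
measure `μ` on `Σ_A^+ × K`, where `({μ_γ}_γ, φ₁ m)` is the Rokhlin
disintegration of `μ` along the vertical fibers and `φ₁ = d(π₁_*μ)/dm`. -/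
noncomputable def fiberR (m : Measure (SigmaA N A))
    (μ : Measure (SigmaA N A × K)) (γ : SigmaA N A) : Measure K := by
  by_cases h : IsFiniteMeasure μ
  · haveI := h
    exact (μ.fst.rnDeriv m γ) • μ.condKernel γ
  · exact 0

/-- The norm `‖μ‖_∞ = ess sup_γ ‖μ|_γ‖_W` of a signed measure written as a
difference `μ = μ₁ - μ₂` of positive measures. -/
noncomputable def infNormPair (m : Measure (SigmaA N A))
    (μ₁ μ₂ : Measure (SigmaA N A × K)) : ℝ≥0∞ :=
  essSup (fun γ => wDist (fiberR m μ₁ γ) (fiberR m μ₂ γ)) m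

/-- The marginal density `φ₁ = d(π₁_*μ)/dm` of the signed measure `μ = μ₁ - μ₂`. -/
noncomputable def phiPair (m : Measure (SigmaA N A))
    (μ₁ μ₂ : Measure (SigmaA N A × K)) (γ : SigmaA N A) : ℝ :=
  (μ₁.fst.rnDeriv m γ).toReal - (μ₂.fst.rnDeriv m γ).toReal

/-- Membership in `AB`: both parts are finite with first marginal absolutely
continuous with respect to `m`. -/
def MemABPair (m : Measure (SigmaA N A)) (μ₁ μ₂ : Measure (SigmaA N A × K)) : Prop :=
  μ₁.fst ≪ m ∧ μ₂.fst ≪ m ∧ IsFiniteMeasure μ₁ ∧ IsFiniteMeasure μ₂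

/-- Membership in `S^∞`: `μ ∈ AB`, `‖μ‖_∞ < ∞` and the marginal density `φ₁`
has a `d_θ`-Lipschitz version. -/
def MemSPair (m : Measure (SigmaA N A)) (θ : ℝ)
    (μ₁ μ₂ : Measure (SigmaA N A × K)) : Prop :=
  MemABPair m μ₁ μ₂ ∧ infNormPair m μ₁ μ₂ < ⊤ ∧
    ∃ ψ : SigmaA N A → ℝ, ψ =ᵐ[m] phiPair m μ₁ μ₂ ∧ LipD (dTheta θ) ψ

/-- `‖φ₁‖_θ`, computed on the best version of the marginal density. -/
noncomputable def thetaNormMu (m : Measure (SigmaA N A)) (θ : ℝ)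
    (μ₁ μ₂ : Measure (SigmaA N A × K)) : ℝ≥0∞ :=
  ⨅ ψ : {ψ : SigmaA N A → ℝ // ψ =ᵐ[m] phiPair m μ₁ μ₂}, thetaNorm (dTheta θ) ψ.val

/-- The norm `‖μ‖_{S^∞} = ‖φ₁‖_θ + ‖μ‖_∞`. -/
noncomputable def sNormPair (m : Measure (SigmaA N A)) (θ : ℝ)
    (μ₁ μ₂ : Measure (SigmaA N A × K)) : ℝ≥0∞ :=
  thetaNormMu m θ μ₁ μ₂ + infNormPair m μ₁ μ₂

/-- Positive part of a signed measure. -/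
noncomputable def jPos {X : Type*} [MeasurableSpace X] (μ : SignedMeasure X) : Measure X :=
  μ.toJordanDecomposition.posPart

/-- Negative part of a signed measure. -/
noncomputable def jNeg {X : Type*} [MeasurableSpace X] (μ : SignedMeasure X) : Measure X :=
  μ.toJordanDecomposition.negPart

/-- Membership in `AB` for signed measures. -/
def MemAB (m : Measure (SigmaA N A)) (μ : SignedMeasure (SigmaA N A × K)) : Prop :=
  MemABPair m (jPos μ) (jNeg μ)

/-- Membership in `S^∞` for signed measures. -/
def MemS (m : Measure (SigmaA N A)) (θ : ℝ) (μ : SignedMeasure (SigmaA N A × K)) : Prop :=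
  MemSPair m θ (jPos μ) (jNeg μ)

/-- `‖μ‖_∞` for signed measures. -/
noncomputable def infNorm (m : Measure (SigmaA N A))
    (μ : SignedMeasure (SigmaA N A × K)) : ℝ≥0∞ :=
  infNormPair m (jPos μ) (jNeg μ)

/-- `‖μ‖_{S^∞}` for signed measures. -/
noncomputable def sNorm (m : Measure (SigmaA N A)) (θ : ℝ)
    (μ : SignedMeasure (SigmaA N A × K)) : ℝ≥0∞ :=
  sNormPair m θ (jPos μ) (jNeg μ)

/-- `‖φ₁‖_∞` of the marginal density of a signed measure. -/
noncomputable def phiSup (m : Measure (SigmaA N A))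
    (μ : SignedMeasure (SigmaA N A × K)) : ℝ≥0∞ :=
  essSup (fun γ => ENNReal.ofReal |phiPair m (jPos μ) (jNeg μ) γ|) m

/-! ### Elementary facts on `dTheta` -/

lemma dT_summable {θ : ℝ} (hθ0 : 0 < θ) (hθ1 : θ < 1) (x y : SigmaA N A) :
    Summable fun i : ℕ => θ ^ i * (if x.val i = y.val i then (0 : ℝ) else 1) := by
  refine Summable.of_nonneg_of_le (fun i => ?_) (fun i => ?_)
    (summable_geometric_of_lt_one hθ0.le hθ1)
  · have := pow_pos hθ0 i
    split_ifs <;> simp [this.le]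
  · have := pow_pos hθ0 i
    split_ifs <;> simp [this.le]

lemma dT_nonneg {θ : ℝ} (hθ0 : 0 < θ) (x y : SigmaA N A) : 0 ≤ dTheta θ x y := by
  refine tsum_nonneg fun i => ?_
  have := pow_pos hθ0 i
  split_ifs <;> simp [this.le]

lemma dT_le {θ : ℝ} (hθ0 : 0 < θ) (hθ1 : θ < 1) (x y : SigmaA N A) :
    dTheta θ x y ≤ (1 - θ)⁻¹ := by
  rw [← tsum_geometric_of_lt_one hθ0.le hθ1]
  refine (dT_summable hθ0 hθ1 x y).tsum_le_tsum (fun i => ?_)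
    (summable_geometric_of_lt_one hθ0.le hθ1)
  have := pow_pos hθ0 i
  split_ifs <;> simp [this.le]

lemma dT_self (θ : ℝ) (x : SigmaA N A) : dTheta θ x x = 0 := by
  simp [dTheta]

lemma dT_comm (θ : ℝ) (x y : SigmaA N A) : dTheta θ x y = dTheta θ y x := by
  unfold dTheta
  congr 1
  funext i
  simp only [eq_comm]

lemma dT_triangle {θ : ℝ} (hθ0 : 0 < θ) (hθ1 : θ < 1) (x y z : SigmaA N A) :
    dTheta θ x z ≤ dTheta θ x y + dTheta θ y z := by
  unfold dTheta
  rw [← (dT_summable hθ0 hθ1 x y).tsum_add (dT_summable hθ0 hθ1 y z)]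
  refine (dT_summable hθ0 hθ1 x z).tsum_le_tsum (fun i => ?_)
    ((dT_summable hθ0 hθ1 x y).add (dT_summable hθ0 hθ1 y z))
  rw [← mul_add]
  refine mul_le_mul_of_nonneg_left ?_ (pow_pos hθ0 i).le
  by_cases h1 : x.val i = y.val i
  · simp [h1]
  · by_cases h2 : y.val i = z.val i
    · simp [h2]
    · simp only [h1, h2, if_false]
      split_ifs <;> norm_num

lemma dT_term_le {θ : ℝ} (hθ0 : 0 < θ) (hθ1 : θ < 1) (x y : SigmaA N A) (i : ℕ) :
    θ ^ i * (if x.val i = y.val i then (0 : ℝ) else 1) ≤ dTheta θ x y := by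
  refine (dT_summable hθ0 hθ1 x y).le_tsum i fun j _ => ?_
  have := pow_pos hθ0 j
  split_ifs <;> simp [this.le]

lemma dT_eq_zero {θ : ℝ} (hθ0 : 0 < θ) (hθ1 : θ < 1) {x y : SigmaA N A}
    (h : dTheta θ x y = 0) : x = y := by
  apply Subtype.ext
  funext i
  by_contra hne
  have h1 := dT_term_le hθ0 hθ1 x y i
  rw [if_neg hne, h] at h1
  have := pow_pos hθ0 i
  linarith

lemma dT_ge_one {θ : ℝ} (hθ0 : 0 < θ) (hθ1 : θ < 1) {x y : SigmaA N A}
    (h : x.val 0 ≠ y.val 0) : 1 ≤ dTheta θ x y := by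
  have h1 := dT_term_le hθ0 hθ1 x y 0
  rw [if_neg h] at h1
  simpa using h1

lemma dT_shift {θ : ℝ} (hθ0 : 0 < θ) (hθ1 : θ < 1) {x y : SigmaA N A}
    (h : x.val 0 = y.val 0) : dTheta θ x y ≤ dTheta θ (shift x) (shift y) := by
  have h1 : dTheta θ x y = θ * dTheta θ (shift x) (shift y) := by
    unfold dTheta
    rw [(dT_summable hθ0 hθ1 x y).tsum_eq_zero_add, ← tsum_mul_left]
    simp only [h, if_true, mul_zero, zero_add, shift]
    congr 1
    funext i
    ring_nf
  rw [h1]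
  have := dT_nonneg hθ0 (shift x) (shift y)
  nlinarith

lemma dT_continuous {θ : ℝ} (hθ0 : 0 < θ) (hθ1 : θ < 1) (y : SigmaA N A) :
    Continuous fun x : SigmaA N A => dTheta θ x y := by
  unfold dTheta
  refine continuous_tsum (fun i => ?_) (summable_geometric_of_lt_one hθ0.le hθ1) (fun i x => ?_)
  · have h1 : Continuous fun x : SigmaA N A => x.val i :=
      (continuous_apply i).comp continuous_subtype_val
    exact continuous_const.mul
      ((continuous_of_discreteTopology (f := fun a : Fin N => if a = y.val i then (0:ℝ) else 1)).comp h1)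
  · have := pow_pos hθ0 i
    rw [Real.norm_eq_abs]
    split_ifs <;> simp [this.le, abs_of_pos hθ0]

lemma lipD_continuous {θ : ℝ} (hθ0 : 0 < θ) (hθ1 : θ < 1) {φ : SigmaA N A → ℝ}
    (h : LipD (dTheta θ) φ) : Continuous φ := by
  obtain ⟨L, hL⟩ := h
  rw [continuous_iff_continuousAt]
  intro y
  rw [ContinuousAt, tendsto_iff_dist_tendsto_zero]
  have h2 : Filter.Tendsto (fun x => L * dTheta θ x y) (nhds y) (nhds 0) := by
    have := ((dT_continuous hθ0 hθ1 y).const_mul L).tendsto y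
    simpa [dT_self] using this
  refine squeeze_zero (fun _ => dist_nonneg) (fun x => ?_) h2
  rw [Real.dist_eq]
  exact hL x y

lemma lipProd_continuous {K : Type*} [MetricSpace K] {θ : ℝ} (hθ0 : 0 < θ) (hθ1 : θ < 1)
    {f : SigmaA N A × K → ℝ} {L : ℝ}
    (hL : ∀ p q, |f p - f q| ≤ L * (dTheta θ p.1 q.1 + dist p.2 q.2)) : Continuous f := by
  rw [continuous_iff_continuousAt]
  intro y
  rw [ContinuousAt, tendsto_iff_dist_tendsto_zero]
  have h2 : Filter.Tendsto (fun x : SigmaA N A × K => L * (dTheta θ x.1 y.1 + dist x.2 y.2))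
      (nhds y) (nhds 0) := by
    have h3 : Continuous fun x : SigmaA N A × K => L * (dTheta θ x.1 y.1 + dist x.2 y.2) :=
      (((dT_continuous hθ0 hθ1 y.1).comp continuous_fst).add
        (continuous_snd.dist continuous_const)).const_mul L
    have := h3.tendsto y
    simpa [dT_self] using this
  refine squeeze_zero (fun _ => dist_nonneg) (fun x => ?_) h2
  rw [Real.dist_eq]
  exact hL x y

/-- McShane extension for `dTheta`. -/
lemma dT_extend {θ : ℝ} (hθ0 : 0 < θ) (hθ1 : θ < 1) {φ : SigmaA N A → ℝ}
    {S : Set (SigmaA N A)} {C : ℝ} (hC : 0 ≤ C)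
    (h : ∀ x ∈ S, ∀ y ∈ S, |φ x - φ y| ≤ C * dTheta θ x y) :
    ∃ ψ : SigmaA N A → ℝ, LipD (dTheta θ) ψ ∧ ∀ x ∈ S, ψ x = φ x := by
  let : PseudoMetricSpace (SigmaA N A) :=
    { dist := dTheta θ
      dist_self := dT_self θ
      dist_comm := dT_comm θ
      dist_triangle := dT_triangle hθ0 hθ1 }
  have h1 : LipschitzOnWith ⟨C, hC⟩ φ S := by
    refine LipschitzOnWith.of_dist_le_mul fun x hx y hy => ?_
    rw [Real.dist_eq]
    exact h x hx y hy
  obtain ⟨g, hg, hgS⟩ := h1.extend_real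
  refine ⟨g, ⟨C, fun x y => ?_⟩, fun x hx => (hgS hx).symm⟩
  have := hg.dist_le_mul x y
  rw [Real.dist_eq] at this
  exact this

lemma shift_measurable : Measurable (shift : SigmaA N A → SigmaA N A) := by
  refine Measurable.subtype_mk ?_
  rw [measurable_pi_iff]
  intro i
  exact (measurable_pi_apply (i + 1)).comp measurable_subtype_coe

lemma coord_measurable (i : ℕ) : Measurable fun x : SigmaA N A => x.val i :=
  (measurable_pi_apply i).comp measurable_subtype_coe

/-! ### Cylinders -/

lemma cyl_measurable (n : ℕ) (w : Fin (n + 1) → Fin N) :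
    MeasurableSet (cylinder n w : Set (SigmaA N A)) := by
  have : (cylinder n w : Set (SigmaA N A)) = ⋂ i : Fin (n+1), {x | x.val i = w i} := by
    ext x; simp [cylinder]
  rw [this]
  exact MeasurableSet.iInter fun i => coord_measurable _ (measurableSet_singleton (w i))

def cylSets (N : ℕ) (A : Fin N → Fin N → Bool) : Set (Set (SigmaA N A)) :=
  {s | ∃ (n : ℕ) (w : Fin (n + 1) → Fin N), s = cylinder n w}

lemma cyl_generate :
    (inferInstance : MeasurableSpace (SigmaA N A)) =
      MeasurableSpace.generateFrom (cylSets N A) := by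
  apply le_antisymm
  · have h1 : Measurable[MeasurableSpace.generateFrom (cylSets N A)]
        (Subtype.val : SigmaA N A → ℕ → Fin N) := by
      let := MeasurableSpace.generateFrom (cylSets N A)
      rw [measurable_pi_iff]
      intro k
      refine measurable_to_countable' fun a => ?_
      have h2 : (fun x : SigmaA N A => x.val k) ⁻¹' {a} =
          ⋃ w : {w : Fin (k+1) → Fin N // w (Fin.last k) = a}, cylinder k w.val := by
        ext x
        simp only [mem_preimage, mem_singleton_iff, mem_iUnion, cylinder, mem_ofPred_eq]
        constructor
        · intro h
          exact ⟨⟨fun i => x.val i, by simpa using h⟩, fun i => rfl⟩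
        · rintro ⟨⟨w, hw⟩, h⟩
          have := h (Fin.last k)
          simpa [hw] using this
      rw [h2]
      exact MeasurableSet.iUnion fun w => MeasurableSpace.measurableSet_generateFrom ⟨k, w.val, rfl⟩
    exact measurable_iff_comap_le.mp h1
  · refine MeasurableSpace.generateFrom_le ?_
    rintro _ ⟨n, w, rfl⟩
    exact cyl_measurable n w

lemma cyl_inter {n n' : ℕ} (hn : n ≤ n') (w : Fin (n + 1) → Fin N) (w' : Fin (n' + 1) → Fin N)
    (h : ((cylinder n w : Set (SigmaA N A)) ∩ cylinder n' w').Nonempty) :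
    (cylinder n w : Set (SigmaA N A)) ∩ cylinder n' w' = cylinder n' w' := by
  obtain ⟨x, hx, hx'⟩ := h
  apply inter_eq_right.mpr
  intro y hy i
  have h1 := hx i
  have h2 := hx' ⟨i, by omega⟩
  have h3 := hy ⟨i, by omega⟩
  simp only at h2 h3
  rw [h3, ← h2, h1]

lemma cyl_pi : IsPiSystem (cylSets N A) := by
  rintro _ ⟨n, w, rfl⟩ _ ⟨n', w', rfl⟩ h
  rcases le_total n n' with hn | hn
  · exact ⟨n', w', cyl_inter hn w w' h⟩
  · rw [inter_comm] at h ⊢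
    exact ⟨n, w, cyl_inter hn w' w h⟩

lemma ext_cyl {μ ν : Measure (SigmaA N A)} [IsFiniteMeasure μ]
    (h : ∀ (n : ℕ) (w : Fin (n + 1) → Fin N), μ (cylinder n w) = ν (cylinder n w)) : μ = ν := by
  refine Measure.ext_of_generateFrom_of_cover_subset (S := cylSets N A)
    (T := range fun w : Fin 1 → Fin N => (cylinder 0 w : Set (SigmaA N A)))
    cyl_generate cyl_pi ?_ (countable_range _) ?_ ?_ ?_
  · rintro _ ⟨w, rfl⟩
    exact ⟨0, w, rfl⟩
  · ext x
    simp only [mem_sUnion, mem_range, exists_exists_eq_and, mem_univ, iff_true]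
    exact ⟨fun i => x.val i, fun i => rfl⟩
  · intro s _
    exact measure_ne_top _ _
  · rintro _ ⟨n, w, rfl⟩
    exact h n w

/-! ### The transfer operator of the Markov measure -/

open Classical in
/-- Total version of `prepend`. -/
noncomputable def pre (i : Fin N) (x : SigmaA N A) : SigmaA N A :=
  if h : A i (x.val 0) = true then prepend i x h else x

lemma pre_measurable (i : Fin N) : Measurable (pre i : SigmaA N A → SigmaA N A) := by
  classical
  have hs : MeasurableSet {x : SigmaA N A | A i (x.val 0) = true} :=
    (coord_measurable 0) (t := {a | A i a = true}) (MeasurableSet.of_discrete)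
  refine Measurable.dite (s := {x : SigmaA N A | A i (x.val 0) = true})
    (f := fun x => prepend i x.1 x.2) (g := fun x => x.1) ?_ measurable_subtype_coe hs
  refine Measurable.subtype_mk ?_
  rw [measurable_pi_iff]
  intro k
  cases k with
  | zero => exact measurable_const
  | succ k => exact (coord_measurable k).comp measurable_subtype_coe

lemma pre_shift (x : SigmaA N A) : pre (x.val 0) (shift x) = x := by
  have h : A (x.val 0) ((shift x).val 0) = true := x.prop 0
  rw [pre, dif_pos h]
  apply Subtype.ext
  funext k
  cases k with
  | zero => rfl
  | succ k => rfl

lemma pre_of {i : Fin N} {x : SigmaA N A} (h : A i (x.val 0) = true) :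
    (pre i x).val 0 = i ∧ (∀ k, (pre i x).val (k+1) = x.val k) ∧ shift (pre i x) = x := by
  rw [pre, dif_pos h]
  exact ⟨rfl, fun k => rfl, rfl⟩

lemma cyl_cons (i : Fin N) (n : ℕ) (w : Fin (n+1) → Fin N) :
    shift ⁻¹' (cylinder n w) ∩ {x : SigmaA N A | x.val 0 = i}
      = cylinder (n+1) (Fin.cons i w : Fin (n+2) → Fin N) := by
  ext x
  simp only [cylinder, mem_inter_iff, mem_preimage, mem_ofPred_eq, shift]
  rw [Fin.forall_fin_succ (P := fun j => x.val j = (Fin.cons i w : Fin (n+2) → Fin N) j)]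
  simp [and_comm]

lemma markov_step {m : Measure (SigmaA N A)} [IsProbabilityMeasure m] (hm : IsMarkov m) :
    ∃ q : Fin N → Fin N → ℝ, (∀ i j, 0 ≤ q i j) ∧ (∀ j, ∑ i, q i j ≤ 1) ∧
      (∀ i j, A i j = false → q i j = 0) ∧
      ∀ i, (m.restrict {x | x.val 0 = i}).map shift =
        m.withDensity fun x => ENNReal.ofReal (q i (x.val 0)) := by
  obtain ⟨p, P, hp, hP, hpP, hA, hc⟩ := hm
  have hpj : ∀ j, p j ≠ ⊤ := by
    intro j hj
    have : p j ≤ 1 := hp ▸ Finset.single_le_sum (f := p) (fun _ _ => zero_le) (Finset.mem_univ j)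
    rw [hj] at this
    simp at this
  have hle : ∀ i j, p i * P i j ≤ p j := by
    intro i j
    rw [← hpP j]
    exact Finset.single_le_sum (f := fun i => p i * P i j) (fun _ _ => zero_le) (Finset.mem_univ i)
  have hq1 : ∀ i j, p i * P i j / p j ≤ 1 := fun i j =>
    ENNReal.div_le_of_le_mul (by simpa using hle i j)
  have hqt : ∀ i j, p i * P i j / p j ≠ ⊤ := fun i j => ne_top_of_le_ne_top (by simp) (hq1 i j)
  refine ⟨fun i j => (p i * P i j / p j).toReal, fun i j => ENNReal.toReal_nonneg, ?_, ?_, ?_⟩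
  · intro j
    rw [← ENNReal.toReal_sum (fun i _ => hqt i j)]
    have : ∑ i, p i * P i j / p j ≤ 1 := by
      simp only [div_eq_mul_inv]
      rw [← Finset.sum_mul, hpP j]
      exact ENNReal.mul_inv_le_one _
    exact ENNReal.toReal_le_of_le_ofReal zero_le_one (by simpa using this)
  · intro i j h
    simp [hA i j h]
  · intro i
    refine ext_cyl fun n w => ?_
    rw [Measure.map_apply shift_measurable (cyl_measurable n w),
      Measure.restrict_apply (shift_measurable (cyl_measurable n w)), cyl_cons, hc,
      withDensity_apply _ (cyl_measurable n w), Fin.prod_univ_succ]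
    have h1 : ∫⁻ x in cylinder n w, ENNReal.ofReal (p i * P i (x.val 0) / p (x.val 0)).toReal ∂m
        = ∫⁻ x in cylinder n w, (p i * P i (w 0) / p (w 0)) ∂m := by
      refine setLIntegral_congr_fun (cyl_measurable n w) fun x hx => ?_
      have h0 : x.val 0 = w 0 := by simpa using hx 0
      simp only [h0, ENNReal.ofReal_toReal (hqt i (w 0))]
    rw [h1, setLIntegral_const, hc, ← mul_assoc, ← mul_assoc, ENNReal.div_mul_cancel']
    · simp [mul_assoc]
    · intro h0
      have := hle i (w 0)
      rw [h0] at this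
      simpa using this
    · intro h0
      exact absurd h0 (hpj _)

lemma transfer_step {m : Measure (SigmaA N A)} [IsProbabilityMeasure m] (hm : IsMarkov m)
    {θ C B : ℝ} (n : ℕ) (h : SigmaA N A → ℝ) (hmeas : Measurable h) (hB : ∀ x, |h x| ≤ B)
    (hB0 : 0 ≤ B) (hC0 : ∀ x y : SigmaA N A, 0 ≤ C * dTheta θ x y)
    (hR : ∀ x y : SigmaA N A, (∀ i ≤ n + 1, x.val i = y.val i) →
      |h x - h y| ≤ C * dTheta θ (shift^[n+1] x) (shift^[n+1] y)) :
    ∃ g : SigmaA N A → ℝ, Measurable g ∧ (∀ x, |g x| ≤ B) ∧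
      (∀ x y : SigmaA N A, (∀ i ≤ n, x.val i = y.val i) →
        |g x - g y| ≤ C * dTheta θ (shift^[n] x) (shift^[n] y)) ∧
      ∀ E : Set (SigmaA N A), MeasurableSet E →
        ∫ x in E, g x ∂m = ∫ x in shift ⁻¹' E, h x ∂m := by
  obtain ⟨q, hq0, hq1, hqA, hmap⟩ := markov_step hm
  have hterm : ∀ i, Measurable fun x : SigmaA N A => q i (x.val 0) * h (pre i x) := fun i =>
    ((measurable_of_finite (q i)).comp (coord_measurable 0)).mul (hmeas.comp (pre_measurable i))
  have hint : ∀ {k : SigmaA N A → ℝ} {c : ℝ}, Measurable k → (∀ x, |k x| ≤ c) → Integrable k m :=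
    fun hk hc => Integrable.of_bound hk.aestronglyMeasurable _ (Filter.Eventually.of_forall hc)
  have hq1' : ∀ i j, q i j ≤ 1 := fun i j =>
    (Finset.single_le_sum (f := fun i => q i j) (fun i _ => hq0 i j) (Finset.mem_univ i)).trans (hq1 j)
  have htermB : ∀ i (x : SigmaA N A), |q i (x.val 0) * h (pre i x)| ≤ q i (x.val 0) * B := by
    intro i x
    rw [abs_mul, abs_of_nonneg (hq0 _ _)]
    exact mul_le_mul_of_nonneg_left (hB _) (hq0 _ _)
  refine ⟨fun x => ∑ i, q i (x.val 0) * h (pre i x), ?_, ?_, ?_, ?_⟩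
  · exact Finset.measurable_sum _ fun i _ => hterm i
  · intro x
    refine (Finset.abs_sum_le_sum_abs _ _).trans ?_
    refine (Finset.sum_le_sum fun i _ => htermB i x).trans ?_
    rw [← Finset.sum_mul]
    nlinarith [hq1 (x.val 0)]
  · intro x y hxy
    have h0 : x.val 0 = y.val 0 := hxy 0 (Nat.zero_le _)
    simp only [← h0]
    rw [← Finset.sum_sub_distrib]
    refine (Finset.abs_sum_le_sum_abs _ _).trans ?_
    refine (Finset.sum_le_sum (g := fun i => q i (x.val 0) *
      (C * dTheta θ (shift^[n] x) (shift^[n] y))) fun i _ => ?_).trans ?_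
    · rw [← mul_sub, abs_mul, abs_of_nonneg (hq0 _ _)]
      by_cases hAi : A i (x.val 0) = true
      · refine mul_le_mul_of_nonneg_left ?_ (hq0 _ _)
        obtain ⟨a1, a2, a3⟩ := pre_of hAi
        obtain ⟨b1, b2, b3⟩ := pre_of (h0 ▸ hAi : A i (y.val 0) = true)
        have := hR (pre i x) (pre i y) (by
          intro k hk
          cases k with
          | zero => rw [a1, b1]
          | succ k => rw [a2, b2]; exact hxy k (by omega))
        rwa [Function.iterate_succ_apply, Function.iterate_succ_apply, a3, b3] at this
      · rw [hqA i _ (by simpa using hAi)]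
        simp
    · rw [← Finset.sum_mul]
      nlinarith [hq1 (x.val 0), hC0 (shift^[n] x) (shift^[n] y)]
  · intro E hE
    have hEi : ∀ i, Integrable (fun x : SigmaA N A => q i (x.val 0) * h (pre i x)) (m.restrict E) :=
      fun i => (hint (c := B) (hterm i) fun x => (htermB i x).trans (by
        nlinarith [hq1' i (x.val 0)])).integrableOn
    rw [integral_finsetSum _ fun i _ => hEi i]
    have hci : ∀ i, MeasurableSet {x : SigmaA N A | x.val 0 = i} := fun i =>
      coord_measurable 0 (measurableSet_singleton i)
    have hU : shift ⁻¹' E = ⋃ i, (shift ⁻¹' E ∩ {x : SigmaA N A | x.val 0 = i}) := by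
      ext x; simp
    rw [hU, integral_iUnion_fintype (fun i => (shift_measurable hE).inter (hci i))]
    · refine Finset.sum_congr rfl fun i _ => ?_
      have e1 : ∫ x in shift ⁻¹' E ∩ {x : SigmaA N A | x.val 0 = i}, h x ∂m
          = ∫ x in shift ⁻¹' E ∩ {x : SigmaA N A | x.val 0 = i}, h (pre i (shift x)) ∂m := by
        refine setIntegral_congr_fun ((shift_measurable hE).inter (hci i)) fun x hx => ?_
        have : x.val 0 = i := hx.2
        simp only [← this, pre_shift]
      rw [e1, ← Measure.restrict_restrict (shift_measurable hE),
        ← setIntegral_map (f := fun x => h (pre i x)) hE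
          (hmeas.comp (pre_measurable i)).aestronglyMeasurable shift_measurable.aemeasurable, hmap i,
        restrict_withDensity hE, integral_withDensity_eq_integral_toReal_smul]
      · refine integral_congr_ae (Filter.Eventually.of_forall fun x => ?_)
        simp [ENNReal.toReal_ofReal (hq0 i _)]
      · exact ((measurable_of_finite (fun j => ENNReal.ofReal (q i j))).comp (coord_measurable 0))
      · exact Filter.Eventually.of_forall fun x => ENNReal.ofReal_lt_top
    · intro i j hij
      refine Set.disjoint_left.mpr fun x hx hx' => hij ?_
      exact hx.2.symm.trans hx'.2
    · intro i
      exact (hint hmeas hB).integrableOn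

lemma transfer_iter {m : Measure (SigmaA N A)} [IsProbabilityMeasure m] (hm : IsMarkov m)
    {θ C B : ℝ} (hB0 : 0 ≤ B) (hC0 : ∀ x y : SigmaA N A, 0 ≤ C * dTheta θ x y) (n : ℕ) :
    ∀ (h : SigmaA N A → ℝ) (_ : Measurable h) (_ : ∀ x, |h x| ≤ B)
    (_ : ∀ x y : SigmaA N A, (∀ i ≤ n, x.val i = y.val i) →
      |h x - h y| ≤ C * dTheta θ (shift^[n] x) (shift^[n] y)),
    ∃ g : SigmaA N A → ℝ, Measurable g ∧ (∀ x, |g x| ≤ B) ∧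
      (∀ x y : SigmaA N A, x.val 0 = y.val 0 → |g x - g y| ≤ C * dTheta θ x y) ∧
      ∀ E : Set (SigmaA N A), MeasurableSet E →
        ∫ x in E, g x ∂m = ∫ x in shift^[n] ⁻¹' E, h x ∂m := by
  induction n with
  | zero =>
    intro h h1 h2 h3
    refine ⟨h, h1, h2, fun x y hxy => ?_, fun E _ => rfl⟩
    refine h3 x y fun i hi => ?_
    obtain rfl : i = 0 := by omega
    exact hxy
  | succ n ih =>
    intro h h1 h2 h3
    obtain ⟨g, g1, g2, g3, g4⟩ := transfer_step hm n h h1 h2 hB0 hC0 h3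
    obtain ⟨k, k1, k2, k3, k4⟩ := ih g g1 g2 g3
    refine ⟨k, k1, k2, k3, fun E hE => ?_⟩
    rw [k4 E hE, g4 _ ((shift_measurable.iterate n) hE)]
    rfl

/-! ### The marginal of `μ₀` is `m` -/

lemma thetaNorm_lt_top {θ : ℝ} (hθ0 : 0 < θ) (hθ1 : θ < 1) {φ : SigmaA N A → ℝ}
    (h : LipD (dTheta θ) φ) [Nonempty (SigmaA N A)] : thetaNorm (dTheta θ) φ < ⊤ := by
  obtain ⟨L, hL⟩ := h
  obtain ⟨x0⟩ := ‹Nonempty (SigmaA N A)›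
  have hL' : ∀ x y, |φ x - φ y| ≤ |L| * dTheta θ x y := fun x y =>
    (hL x y).trans (mul_le_mul_of_nonneg_right (le_abs_self L) (dT_nonneg hθ0 x y))
  refine ENNReal.add_lt_top.mpr ⟨?_, ?_⟩
  · refine lt_of_le_of_lt (iSup_le fun x => ?_)
      (ENNReal.ofReal_lt_top (r := |φ x0| + |L| * (1 - θ)⁻¹))
    refine ENNReal.ofReal_le_ofReal ?_
    have h1 := hL' x x0
    have h2 := mul_le_mul_of_nonneg_left (dT_le hθ0 hθ1 x x0) (abs_nonneg L)
    have h3 := abs_sub_abs_le_abs_sub (φ x) (φ x0)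
    linarith
  · refine lt_of_le_of_lt (iSup_le fun x => iSup_le fun y => ?_)
      (ENNReal.ofReal_lt_top (r := |L|))
    exact ENNReal.ofReal_le_ofReal
      (div_le_of_le_mul₀ (dT_nonneg hθ0 x y) (abs_nonneg L) (hL' x y))

lemma abs_le_thetaNorm {θ : ℝ} {φ : SigmaA N A → ℝ} {c : ℝ} (hc : 0 ≤ c)
    (h : thetaNorm (dTheta θ) φ ≤ ENNReal.ofReal c) (x : SigmaA N A) : |φ x| ≤ c := by
  have h1 : ENNReal.ofReal |φ x| ≤ supNormE φ := le_iSup (fun x => ENNReal.ofReal |φ x|) x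
  exact (ENNReal.ofReal_le_ofReal_iff hc).mp ((h1.trans le_self_add).trans h)

lemma lip_of_thetaNorm {θ : ℝ} (hθ0 : 0 < θ) (hθ1 : θ < 1) {φ : SigmaA N A → ℝ} {c : ℝ}
    (hc : 0 ≤ c) (h : thetaNorm (dTheta θ) φ ≤ ENNReal.ofReal c) : LipD (dTheta θ) φ := by
  refine ⟨c, fun x y => ?_⟩
  have h1 : ENNReal.ofReal (|φ x - φ y| / dTheta θ x y) ≤ lipConst (dTheta θ) φ :=
    le_iSup₂ (f := fun x y => ENNReal.ofReal (|φ x - φ y| / dTheta θ x y)) x y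
  have h2 := (ENNReal.ofReal_le_ofReal_iff hc).mp ((h1.trans le_add_self).trans h)
  rcases (dT_nonneg hθ0 x y).eq_or_lt with h0 | h0
  · rw [dT_eq_zero hθ0 hθ1 h0.symm]
    simp [dT_self]
  · exact (div_le_iff₀ h0).mp h2

lemma map_iter {X : Type*} [MeasurableSpace X] {μ : Measure X} {T : X → X} (hT : Measurable T)
    (h : μ.map T = μ) (n : ℕ) : μ.map T^[n] = μ :=
  (MeasurePreserving.iterate ⟨hT, h⟩ n).map_eq

lemma fst_eq {θ : ℝ} (hθ0 : 0 < θ) (hθ1 : θ < 1)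
    {m : Measure (SigmaA N A)} [IsProbabilityMeasure m] (hminv : m.map shift = m)
    {Pσ : (SigmaA N A → ℝ) → SigmaA N A → ℝ} (hPF : IsPerronFrobenius m Pσ)
    {D r : ℝ} (hD : 0 < D) (hr0 : 0 < r) (hr1 : r < 1) (hgap : HasGap m θ Pσ D r)
    {ν : Measure (SigmaA N A)} [IsProbabilityMeasure ν] (hνinv : ν.map shift = ν) (hν : ν ≪ m)
    {ψ : SigmaA N A → ℝ} (hψ : ψ =ᵐ[m] fun γ => (ν.rnDeriv m γ).toReal)
    (hL : LipD (dTheta θ) ψ) : ν = m := by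
  have : Nonempty (SigmaA N A) := m.nonempty_of_neZero
  have hψi : Integrable ψ m := Measure.integrable_toReal_rnDeriv.congr hψ.symm
  have hψE : ∀ E, ∫ x in E, ψ x ∂m = ν.real E := by
    intro E
    rw [← Measure.setIntegral_toReal_rnDeriv hν E]
    exact integral_congr_ae (ae_restrict_of_ae hψ)
  set φ : SigmaA N A → ℝ := fun x => ψ x - 1 with hφ
  have hφi : Integrable φ m := hψi.sub (integrable_const _)
  have hφE : ∀ E, MeasurableSet E → ∫ x in E, φ x ∂m = ν.real E - m.real E := by
    intro E hE
    rw [hφ, integral_sub hψi.integrableOn (integrable_const _), hψE]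
    simp
  have hφ0 : ∫ x, φ x ∂m = 0 := by
    have := hφE univ MeasurableSet.univ
    simpa using this
  have hφL : LipD (dTheta θ) φ := by
    obtain ⟨L, hL⟩ := hL
    exact ⟨L, fun x y => by simpa [hφ] using hL x y⟩
  set c := (thetaNorm (dTheta θ) φ).toReal with hc
  have hc0 : 0 ≤ c := ENNReal.toReal_nonneg
  have hbd : ∀ n, thetaNorm (dTheta θ) (Pσ^[n] φ) ≤ ENNReal.ofReal (D * r ^ n * c) := by
    intro n
    rw [ENNReal.ofReal_mul (by positivity), hc,
      ENNReal.ofReal_toReal (thetaNorm_lt_top hθ0 hθ1 hφL).ne]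
    exact hgap φ hφL hφ0 n
  have hnn : ∀ n, 0 ≤ D * r ^ n * c := fun n => by positivity
  have hPi : ∀ n, Integrable (Pσ^[n] φ) m := fun n =>
    Integrable.of_bound
      (lipD_continuous hθ0 hθ1 (lip_of_thetaNorm hθ0 hθ1 (hnn n) (hbd n))).measurable.aestronglyMeasurable
      _ (Filter.Eventually.of_forall (abs_le_thetaNorm (hnn n) (hbd n)))
  have hdual : ∀ n (E : Set (SigmaA N A)), MeasurableSet E →
      ∫ x in E, Pσ^[n] φ x ∂m = ∫ x in shift^[n] ⁻¹' E, φ x ∂m := by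
    intro n
    induction n with
    | zero => intro E _; rfl
    | succ n ih =>
      intro E hE
      have h1 := hPF (Pσ^[n] φ) (E.indicator fun _ => 1) (hPi n)
        (measurable_const.indicator hE) ⟨1, fun x => by
          by_cases hx : x ∈ E <;> simp [hx]⟩
      have e1 : ∀ (k : SigmaA N A → ℝ) x, k x * E.indicator (fun _ => (1:ℝ)) x = E.indicator k x := by
        intro k x
        by_cases hx : x ∈ E <;> simp [hx]
      have e2 : ∀ (k : SigmaA N A → ℝ) x, k x * E.indicator (fun _ => (1:ℝ)) (shift x)
          = (shift ⁻¹' E).indicator k x := by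
        intro k x
        by_cases hx : shift x ∈ E <;> simp [hx]
      simp only [e1, e2] at h1
      rw [integral_indicator hE, integral_indicator (shift_measurable hE),
        ih _ (shift_measurable hE)] at h1
      rw [Function.iterate_succ_apply', h1, Function.iterate_succ', preimage_comp]
  have key : ∀ E, MeasurableSet E → ν.real E = m.real E := by
    intro E hE
    have hn : ∀ n, |ν.real E - m.real E| ≤ D * r ^ n * c := by
      intro n
      have h1 := hdual n E hE
      have hE' : MeasurableSet (shift^[n] ⁻¹' E) := shift_measurable.iterate n hE
      rw [hφE _ hE', measureReal_def, measureReal_def,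
        ← Measure.map_apply (shift_measurable.iterate n) hE,
        ← Measure.map_apply (shift_measurable.iterate n) hE,
        map_iter shift_measurable hνinv, map_iter shift_measurable hminv] at h1
      rw [measureReal_def, measureReal_def, ← h1]
      have h2 := norm_setIntegral_le_of_norm_le_const (μ := m) (s := E) (f := Pσ^[n] φ)
        (measure_lt_top m E) (fun x _ => abs_le_thetaNorm (hnn n) (hbd n) x)
      refine h2.trans ?_
      have h3 : m.real E ≤ 1 := measureReal_le_one
      nlinarith [hnn n]
    have hlim : Filter.Tendsto (fun n : ℕ => D * r ^ n * c) Filter.atTop (nhds 0) := by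
      have := ((tendsto_pow_atTop_nhds_zero_of_lt_one hr0.le hr1).const_mul D).mul_const c
      simpa using this
    have h4 := ge_of_tendsto' hlim hn
    have h5 := abs_nonpos_iff.mp h4
    linarith
  ext E hE
  have := key E hE
  rwa [measureReal_def, measureReal_def, ENNReal.toReal_eq_toReal_iff' (measure_ne_top _ _)
    (measure_ne_top _ _)] at this

/-! ### Fiber contraction -/

section fiber

variable {K : Type*} [MetricSpace K]

lemma skew_iter_fst (G : SigmaA N A × K → K) (n : ℕ) (p : SigmaA N A × K) :
    ((skew G)^[n] p).1 = shift^[n] p.1 := by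
  induction n with
  | zero => rfl
  | succ n ih => rw [Function.iterate_succ_apply', Function.iterate_succ_apply', ← ih]; rfl

lemma skew_iter_contr {G : SigmaA N A × K → K} {α : ℝ} (hα0 : 0 < α) (hG1 : CondG1 G α)
    (n : ℕ) (x : SigmaA N A) (z z' : K) :
    dist ((skew G)^[n] (x, z)).2 ((skew G)^[n] (x, z')).2 ≤ α ^ n * dist z z' := by
  induction n with
  | zero => simp
  | succ n ih =>
    rw [Function.iterate_succ_apply', Function.iterate_succ_apply']
    have h1 := hG1 (shift^[n] x) ((skew G)^[n] (x, z)).2 ((skew G)^[n] (x, z')).2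
    have e : ∀ z, (skew G ((skew G)^[n] (x, z))).2
        = G (shift^[n] x, ((skew G)^[n] (x, z)).2) := by
      intro z
      rw [← skew_iter_fst G n (x, z)]
      rfl
    rw [e, e]
    refine h1.trans ?_
    rw [pow_succ']
    nlinarith

lemma skew_iter_lip {θ : ℝ} (hθ0 : 0 < θ) (hθ1 : θ < 1) {G : SigmaA N A × K → K} {α H : ℝ}
    (hα0 : 0 < α) (hα1 : α < 1) (hG1 : CondG1 G α) (hG2 : CondG2 θ G H)
    (n : ℕ) (x y : SigmaA N A) (z : K) (hxy : ∀ i ≤ n, x.val i = y.val i) :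
    dist ((skew G)^[n] (x, z)).2 ((skew G)^[n] (y, z)).2
      ≤ |H| / (1 - α) * dTheta θ (shift^[n] x) (shift^[n] y) := by
  have hα : 0 < 1 - α := by linarith
  induction n with
  | zero =>
    simp only [Function.iterate_zero, id_eq, dist_self]
    exact mul_nonneg (by positivity) (dT_nonneg hθ0 _ _)
  | succ n ih =>
    have ih' := ih fun i hi => hxy i (by omega)
    rw [Function.iterate_succ_apply', Function.iterate_succ_apply',
      Function.iterate_succ_apply', Function.iterate_succ_apply']
    have e : ∀ x, (skew G ((skew G)^[n] (x, z))).2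
        = G (shift^[n] x, ((skew G)^[n] (x, z)).2) := by
      intro x
      rw [← skew_iter_fst G n (x, z)]
      rfl
    rw [e, e]
    have hs : ∀ (k : ℕ) (x : SigmaA N A) (j : ℕ), (shift^[k] x).val j = x.val (j + k) := by
      intro k
      induction k with
      | zero => intro x j; rfl
      | succ k ihk =>
        intro x j
        rw [Function.iterate_succ_apply, ihk]
        rfl
    have h0 : (shift^[n] x).val 0 = (shift^[n] y).val 0 := by
      rw [hs, hs]; exact hxy _ (by omega)
    have hd := dT_shift hθ0 hθ1 h0
    have h1 := hG1 (shift^[n] x) ((skew G)^[n] (x, z)).2 ((skew G)^[n] (y, z)).2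
    have h2 := hG2 ((skew G)^[n] (y, z)).2 (shift^[n] x) (shift^[n] y)
    have h3 := dist_triangle (G (shift^[n] x, ((skew G)^[n] (x, z)).2))
      (G (shift^[n] x, ((skew G)^[n] (y, z)).2)) (G (shift^[n] y, ((skew G)^[n] (y, z)).2))
    set d0 := dTheta θ (shift^[n] x) (shift^[n] y)
    set d1 := dTheta θ (shift (shift^[n] x)) (shift (shift^[n] y))
    have hd0 : 0 ≤ d0 := dT_nonneg hθ0 _ _
    have h4 : H * d0 ≤ |H| * d0 := mul_le_mul_of_nonneg_right (le_abs_self H) hd0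
    have h5 : α * (|H| / (1 - α) * d0) + |H| * d0 = |H| / (1 - α) * d0 := by
      field_simp; ring
    have h6 : |H| / (1 - α) * d0 ≤ |H| / (1 - α) * d1 :=
      mul_le_mul_of_nonneg_left hd (by positivity)
    have h7 := mul_le_mul_of_nonneg_left ih' hα0.le
    linarith

end fiber

section main

variable {K : Type*} [MetricSpace K] [MeasurableSpace K]

lemma rnDeriv_fst_bound {m : Measure (SigmaA N A)} [IsProbabilityMeasure m]
    {μ₀ : Measure (SigmaA N A × K)} [IsProbabilityMeasure μ₀] (hfst : μ₀.fst = m)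
    {u : SigmaA N A × K → ℝ} {B : ℝ} (hu : ∀ p, u p ≤ B) :
    ∀ᵐ γ ∂m, (μ₀.withDensity fun p => ENNReal.ofReal (u p)).fst.rnDeriv m γ ≤ ENNReal.ofReal B := by
  refine ae_le_of_forall_setLIntegral_le_of_sigmaFinite (Measure.measurable_rnDeriv _ _)
    fun E hE _ => ?_
  refine (Measure.setLIntegral_rnDeriv_le E).trans ?_
  rw [Measure.fst_apply hE, withDensity_apply _ (measurable_fst hE)]
  refine (lintegral_mono fun p => ENNReal.ofReal_le_ofReal (hu p)).trans ?_
  rw [lintegral_const, lintegral_const, Measure.restrict_apply_univ, Measure.restrict_apply_univ,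
    ← Measure.fst_apply hE, hfst]

lemma withDensity_fst_ac {m : Measure (SigmaA N A)}
    {μ₀ : Measure (SigmaA N A × K)} (hfst : μ₀.fst = m) (u : SigmaA N A × K → ℝ≥0∞) :
    (μ₀.withDensity u).fst ≪ m := by
  rw [← hfst]
  exact (withDensity_absolutelyContinuous μ₀ u).map measurable_fst

lemma integral_fiber_bound {κ : Measure K} [IsProbabilityMeasure κ] {c : ℝ≥0∞} {B : ℝ}
    (hB : 0 ≤ B) (hc : c ≤ ENNReal.ofReal B) {g : K → ℝ} (hg : ∀ z, |g z| ≤ 1) :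
    |∫ z, g z ∂(c • κ)| ≤ B := by
  rw [integral_smul_measure, smul_eq_mul, abs_mul, abs_of_nonneg ENNReal.toReal_nonneg]
  have h1 : |∫ z, g z ∂κ| ≤ 1 := by
    have := norm_integral_le_of_norm_le_const (μ := κ) (f := g) (C := 1)
      (Filter.Eventually.of_forall hg)
    simpa using this
  have h2 : c.toReal ≤ B := ENNReal.toReal_le_of_le_ofReal hB hc
  have h3 : 0 ≤ c.toReal := ENNReal.toReal_nonneg
  nlinarith [abs_nonneg (∫ z, g z ∂κ)]

variable [BorelSpace K] [CompactSpace K] [Nonempty K]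

lemma main_aux {θ : ℝ} (hθ0 : 0 < θ) (hθ1 : θ < 1)
    {m : Measure (SigmaA N A)} [IsProbabilityMeasure m] (hmM : IsMarkov m)
    (hdiam : Metric.diam (Set.univ : Set K) = 1)
    {G : SigmaA N A × K → K} (hGm : Measurable (skew G))
    {α : ℝ} (hα0 : 0 < α) (hα1 : α < 1) (hG1 : CondG1 G α)
    {H : ℝ} (hG2 : CondG2 θ G H)
    {μ₀ : Measure (SigmaA N A × K)} [IsProbabilityMeasure μ₀]
    (hinv : μ₀.map (skew G) = μ₀) (hfst : μ₀.fst = m)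
    {f : SigmaA N A × K → ℝ} {L : ℝ} (hL0 : 0 ≤ L)
    (hL : ∀ p q, |f p - f q| ≤ L * (dTheta θ p.1 q.1 + dist p.2 q.2)) :
      MemSPair m θ (μ₀.withDensity fun p => ENNReal.ofReal (f p))
        (μ₀.withDensity fun p => ENNReal.ofReal (-f p)) := by
  have hfm : Measurable f := (lipProd_continuous hθ0 hθ1 hL).measurable
  obtain ⟨p0⟩ : Nonempty (SigmaA N A × K) := μ₀.nonempty_of_neZero
  have hdist : ∀ z z' : K, dist z z' ≤ 1 := fun z z' => by
    rw [← hdiam]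
    exact Metric.dist_le_diam_of_mem isCompact_univ.isBounded (mem_univ _) (mem_univ _)
  obtain ⟨B, hB0, hB⟩ : ∃ B : ℝ, 0 ≤ B ∧ ∀ p, |f p| ≤ B := by
    refine ⟨|f p0| + L * ((1 - θ)⁻¹ + 1), ?_, fun p => ?_⟩
    · have : 0 < 1 - θ := by linarith
      positivity
    · have h1 := hL p p0
      have h2 := mul_le_mul_of_nonneg_left
        (add_le_add (dT_le hθ0 hθ1 p.1 p0.1) (hdist p.2 p0.2)) hL0
      have h3 := abs_sub_abs_le_abs_sub (f p) (f p0)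
      linarith
  have hfi : Integrable f μ₀ :=
    Integrable.of_bound hfm.aestronglyMeasurable _ (Filter.Eventually.of_forall hB)
  set μ₁ := μ₀.withDensity fun p => ENNReal.ofReal (f p) with hμ₁
  set μ₂ := μ₀.withDensity fun p => ENNReal.ofReal (-f p) with hμ₂
  have hfin1 : IsFiniteMeasure μ₁ := isFiniteMeasure_withDensity_ofReal hfi.2
  have hfin2 : IsFiniteMeasure μ₂ := isFiniteMeasure_withDensity_ofReal hfi.neg.2
  have hac1 : μ₁.fst ≪ m := withDensity_fst_ac hfst _
  have hac2 : μ₂.fst ≪ m := withDensity_fst_ac hfst _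
  have hb1 : ∀ᵐ γ ∂m, μ₁.fst.rnDeriv m γ ≤ ENNReal.ofReal B :=
    rnDeriv_fst_bound hfst fun p => (le_abs_self _).trans (hB p)
  have hb2 : ∀ᵐ γ ∂m, μ₂.fst.rnDeriv m γ ≤ ENNReal.ofReal B :=
    rnDeriv_fst_bound hfst fun p => (neg_le_abs _).trans (hB p)
  refine ⟨⟨hac1, hac2, hfin1, hfin2⟩, ?_, ?_⟩
  · refine lt_of_le_of_lt (essSup_le_of_ae_le (ENNReal.ofReal (2 * B)) ?_) ENNReal.ofReal_lt_top
    filter_upwards [hb1, hb2] with γ h1 h2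
    refine iSup_le fun g => ENNReal.ofReal_le_ofReal ?_
    have e1 : fiberR m μ₁ γ = (μ₁.fst.rnDeriv m γ) • μ₁.condKernel γ := by
      simp only [fiberR, hfin1, dif_pos]
    have e2 : fiberR m μ₂ γ = (μ₂.fst.rnDeriv m γ) • μ₂.condKernel γ := by
      simp only [fiberR, hfin2, dif_pos]
    rw [e1, e2]
    have a1 := integral_fiber_bound (κ := μ₁.condKernel γ) hB0 h1 g.2.2
    have a2 := integral_fiber_bound (κ := μ₂.condKernel γ) hB0 h2 g.2.2
    refine (abs_sub _ _).trans ?_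
    linarith
  · set φ := phiPair m μ₁ μ₂ with hφ
    have hi1 : Integrable (fun γ => (μ₁.fst.rnDeriv m γ).toReal) m :=
      Measure.integrable_toReal_rnDeriv
    have hi2 : Integrable (fun γ => (μ₂.fst.rnDeriv m γ).toReal) m :=
      Measure.integrable_toReal_rnDeriv
    have hφi : Integrable φ m := hi1.sub hi2
    have hφE : ∀ E, MeasurableSet E →
        ∫ γ in E, φ γ ∂m = ∫ p in Prod.fst ⁻¹' E, f p ∂μ₀ := by
      intro E hE
      have h1 : ∫ γ in E, φ γ ∂m = μ₁.fst.real E - μ₂.fst.real E := by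
        rw [← Measure.setIntegral_toReal_rnDeriv hac1, ← Measure.setIntegral_toReal_rnDeriv hac2]
        exact integral_sub hi1.integrableOn hi2.integrableOn
      rw [h1, integral_eq_lintegral_pos_part_sub_lintegral_neg_part hfi.integrableOn,
        measureReal_def, measureReal_def, Measure.fst_apply hE, Measure.fst_apply hE,
        hμ₁, hμ₂, withDensity_apply _ (measurable_fst hE), withDensity_apply _ (measurable_fst hE)]
    have hα : 0 < 1 - α := by linarith
    set C := L * (1 + |H| / (1 - α)) with hC
    have hC0 : 0 ≤ C := by positivity
    have hCd : ∀ x y : SigmaA N A, 0 ≤ C * dTheta θ x y := fun x y =>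
      mul_nonneg hC0 (dT_nonneg hθ0 x y)
    obtain ⟨z0⟩ := ‹Nonempty K›
    have hmk : Measurable fun x : SigmaA N A => (x, z0) := measurable_id.prodMk measurable_const
    have hex : ∀ n : ℕ, ∃ g : SigmaA N A → ℝ, Measurable g ∧ (∀ x, |g x| ≤ B) ∧
        (∀ x y : SigmaA N A, x.val 0 = y.val 0 → |g x - g y| ≤ C * dTheta θ x y) ∧
        ∀ E : Set (SigmaA N A), MeasurableSet E →
          ∫ x in E, g x ∂m = ∫ x in shift^[n] ⁻¹' E, f ((skew G)^[n] (x, z0)) ∂m := by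
      intro n
      refine transfer_iter hmM hB0 hCd n (fun x => f ((skew G)^[n] (x, z0)))
        (hfm.comp ((hGm.iterate n).comp hmk)) (fun x => hB _) fun x y hxy => ?_
      refine (hL _ _).trans ?_
      have h1 := skew_iter_lip hθ0 hθ1 hα0 hα1 hG1 hG2 n x y z0 hxy
      rw [skew_iter_fst, skew_iter_fst, hC, mul_assoc]
      refine mul_le_mul_of_nonneg_left ?_ hL0
      rw [add_mul, one_mul]
      exact add_le_add le_rfl h1
    choose g hgm hgB hgL hgE using hex
    have hgi : ∀ n, Integrable (g n) m := fun n =>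
      Integrable.of_bound (hgm n).aestronglyMeasurable _ (Filter.Eventually.of_forall (hgB n))
    have hdiff : ∀ n E, MeasurableSet E →
        |∫ γ in E, φ γ ∂m - ∫ γ in E, g n γ ∂m| ≤ L * α ^ n * m.real E := by
      intro n E hE
      have hE1 : MeasurableSet (Prod.fst ⁻¹' E : Set (SigmaA N A × K)) := measurable_fst hE
      have hEn : MeasurableSet (shift^[n] ⁻¹' E) := shift_measurable.iterate n hE
      have hFn := hGm.iterate n
      have hsets : (skew G)^[n] ⁻¹' (Prod.fst ⁻¹' E) = Prod.fst ⁻¹' (shift^[n] ⁻¹' E) := by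
        ext p
        simp only [mem_preimage, skew_iter_fst]
      have e1 : ∫ p in Prod.fst ⁻¹' E, f p ∂μ₀
          = ∫ p in Prod.fst ⁻¹' (shift^[n] ⁻¹' E), f ((skew G)^[n] p) ∂μ₀ := by
        conv_lhs => rw [← map_iter hGm hinv n]
        rw [setIntegral_map hE1 hfm.aestronglyMeasurable hFn.aemeasurable, hsets]
      have e2 : ∫ x in shift^[n] ⁻¹' E, f ((skew G)^[n] (x, z0)) ∂m
          = ∫ p in Prod.fst ⁻¹' (shift^[n] ⁻¹' E), f ((skew G)^[n] (p.1, z0)) ∂μ₀ := by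
        conv_lhs => rw [← hfst, Measure.fst]
        rw [setIntegral_map (f := fun x => f ((skew G)^[n] (x, z0))) hEn (hfm.comp (hFn.comp hmk)).aestronglyMeasurable
          measurable_fst.aemeasurable]
      have i1 : Integrable (fun p => f ((skew G)^[n] p)) μ₀ :=
        Integrable.of_bound (hfm.comp hFn).aestronglyMeasurable _
          (Filter.Eventually.of_forall fun p => hB _)
      have i2 : Integrable (fun p : SigmaA N A × K => f ((skew G)^[n] (p.1, z0))) μ₀ :=
        Integrable.of_bound
          (hfm.comp (hFn.comp (hmk.comp measurable_fst))).aestronglyMeasurable _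
          (Filter.Eventually.of_forall fun p => hB _)
      rw [hφE E hE, hgE n E hE, e1, e2, ← integral_sub i1.integrableOn i2.integrableOn]
      have hmass : m.real E = μ₀.real (Prod.fst ⁻¹' (shift^[n] ⁻¹' E)) := by
        rw [measureReal_def, measureReal_def, ← hsets, ← Measure.map_apply hFn hE1,
          map_iter hGm hinv n, ← Measure.fst_apply hE, hfst]
      rw [hmass]
      rw [← Real.norm_eq_abs]
      refine norm_setIntegral_le_of_norm_le_const (measure_lt_top _ _) fun p _ => ?_
      refine (hL _ _).trans ?_
      rw [skew_iter_fst, skew_iter_fst, dT_self, zero_add]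
      refine mul_le_mul_of_nonneg_left ?_ hL0
      have h1 := skew_iter_contr hα0 hG1 n p.1 p.2 z0
      have h2 := mul_le_mul_of_nonneg_left (hdist p.2 z0) (pow_pos hα0 n).le
      rw [mul_one] at h2
      exact h1.trans h2
    have hae : ∀ᵐ γ ∂m, ∀ n, |φ γ - g n γ| ≤ L * α ^ n := by
      rw [ae_all_iff]
      intro n
      have hcE : ∀ E, ∫ _ in E, L * α ^ n ∂m = L * α ^ n * m.real E := by
        intro E
        simp [mul_comm]
      have hu : φ ≤ᵐ[m] fun γ => g n γ + L * α ^ n := by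
        refine ae_le_of_forall_setIntegral_le hφi ((hgi n).add (integrable_const _)) fun E hE _ => ?_
        rw [integral_add (hgi n).integrableOn (integrable_const _), hcE]
        have := (abs_le.mp (hdiff n E hE)).2
        linarith
      have hl : (g n) ≤ᵐ[m] fun γ => φ γ + L * α ^ n := by
        refine ae_le_of_forall_setIntegral_le (hgi n) (hφi.add (integrable_const _)) fun E hE _ => ?_
        rw [integral_add hφi.integrableOn (integrable_const _), hcE]
        have := (abs_le.mp (hdiff n E hE)).1
        linarith
      filter_upwards [hu, hl] with γ h1 h2
      exact abs_le.mpr ⟨by linarith, by linarith⟩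
    have hlim : ∀ c : ℝ, Filter.Tendsto (fun n : ℕ => c + 2 * (L * α ^ n)) Filter.atTop (nhds c) := by
      intro c
      have := (((tendsto_pow_atTop_nhds_zero_of_lt_one hα0.le hα1).const_mul L).const_mul 2).const_add c
      simpa using this
    set S : Set (SigmaA N A) := {γ | ∀ n, |φ γ - g n γ| ≤ L * α ^ n} with hS
    have hlip : ∀ x ∈ S, ∀ y ∈ S, |φ x - φ y| ≤ (C + 2 * B) * dTheta θ x y := by
      intro x hx y hy
      have hstep : ∀ n, |φ x - φ y| ≤ |g n x - g n y| + 2 * (L * α ^ n) := by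
        intro n
        have h1 := abs_le.mp (hx n)
        have h2 := abs_le.mp (hy n)
        have h3 := abs_le.mp (le_refl |g n x - g n y|)
        exact abs_le.mpr ⟨by linarith, by linarith⟩
      have hd := dT_nonneg hθ0 x y
      by_cases h0 : x.val 0 = y.val 0
      · have h1 : |φ x - φ y| ≤ C * dTheta θ x y :=
          ge_of_tendsto' (hlim (C * dTheta θ x y)) fun n =>
            (hstep n).trans (add_le_add (hgL n x y h0) le_rfl)
        nlinarith
      · have h1 : |φ x - φ y| ≤ 2 * B :=
          ge_of_tendsto' (hlim (2 * B)) fun n =>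
            (hstep n).trans (add_le_add ((abs_sub _ _).trans (by
              linarith [hgB n x, hgB n y])) le_rfl)
        have h2 := dT_ge_one hθ0 hθ1 h0
        nlinarith [hCd x y]
    obtain ⟨ψ, hψL, hψ⟩ := dT_extend hθ0 hθ1 (by positivity : 0 ≤ C + 2 * B) hlip
    refine ⟨ψ, ?_, hψL⟩
    filter_upwards [hae] with γ hγ
    exact hψ γ hγ

end main

/-- Under (G1), (G2) and the spectral gap of `P_σ`, every
function `f` on `Σ_A^+ × K` which is Lipschitz with respect to `d_θ + d`
satisfies `fμ₀ ∈ S^∞`; i.e. the Lipschitz functions are contained in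
`Θ_{μ₀}`. -/
theorem lipschitz_subset_Theta
    (N : ℕ) (A : Fin N → Fin N → Bool) (hA : Aperiodic A)
    (θ : ℝ) (hθ0 : 0 < θ) (hθ1 : θ < 1)
    (m : Measure (SigmaA N A)) [IsProbabilityMeasure m]
    (hmM : IsMarkov m) (hminv : m.map shift = m)
    {K : Type*} [MetricSpace K] [CompactSpace K] [Nonempty K]
    [MeasurableSpace K] [BorelSpace K]
    (hdiam : Metric.diam (Set.univ : Set K) = 1)
    (G : SigmaA N A × K → K) (hGm : Measurable (skew G))
    (α : ℝ) (hα0 : 0 < α) (hα1 : α < 1) (hG1 : CondG1 G α)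
    (H : ℝ) (hG2 : CondG2 θ G H)
    (Pσ : (SigmaA N A → ℝ) → SigmaA N A → ℝ) (hPF : IsPerronFrobenius m Pσ)
    (D r : ℝ) (hD : 0 < D) (hr0 : 0 < r) (hr1 : r < 1)
    (hgap : HasGap m θ Pσ D r)
    (μ₀ : Measure (SigmaA N A × K)) [IsProbabilityMeasure μ₀]
    (hinv : μ₀.map (skew G) = μ₀) (hS : MemSPair m θ μ₀ 0)
    (huniq : ∀ μ' : Measure (SigmaA N A × K),
      IsProbabilityMeasure μ' → μ'.map (skew G) = μ' → MemSPair m θ μ' 0 → μ' = μ₀) :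
    ∀ f : SigmaA N A × K → ℝ,
      (∃ Lf : ℝ, ∀ p q, |f p - f q| ≤ Lf * (dTheta θ p.1 q.1 + dist p.2 q.2)) →
      MemSPair m θ (μ₀.withDensity fun p => ENNReal.ofReal (f p))
        (μ₀.withDensity fun p => ENNReal.ofReal (-f p)) := by
  rintro f ⟨Lf, hLf⟩
  have hνinv : μ₀.fst.map shift = μ₀.fst := by
    conv_rhs => rw [← hinv]
    rw [Measure.fst, Measure.fst, Measure.map_map shift_measurable measurable_fst,
      Measure.map_map measurable_fst hGm]
    rfl
  obtain ⟨⟨hac, -⟩, -, ψ, hψ, hψL⟩ := hS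
  have hψ' : ψ =ᵐ[m] fun γ => (μ₀.fst.rnDeriv m γ).toReal := by
    have h0 : (0 : Measure (SigmaA N A × K)).fst = 0 := by simp
    filter_upwards [hψ, Measure.rnDeriv_zero m] with γ h1 h2
    rw [h1, phiPair, h0, h2]
    simp
  have hfst : μ₀.fst = m :=
    fst_eq hθ0 hθ1 hminv hPF hD hr0 hr1 hgap hνinv hac hψ' hψL
  refine main_aux hθ0 hθ1 hmM hdiam hGm hα0 hα1 hG1 hG2 hinv hfst (abs_nonneg Lf) fun p q => ?_
  exact (hLf p q).trans (mul_le_mul_of_nonneg_right (le_abs_self Lf)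
    (add_nonneg (dT_nonneg hθ0 _ _) dist_nonneg))

end RDS
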